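/- Let R be a commutative noetherian ring, M a finitely generated d-torsionfree module with R ∈ add M, and X finitely generated with grade_R X > c, 0 ≤ c < d. With A = End_R(M ⊕ Ω^c X) and e the idempotent corresponding to M, the projective dimension of the left A-module A/AeA is at most gldim End_R(M). -/

import Mathlib

open CategoryTheory
universe u
noncomputable section

/-- A linear map factors through a projective module. -/
def FactorsThroughProjective {R : Type u} [Ring R] {M N : Type u}
    [AddCommGroup M] [AddCommGroup N] [Module R M] [Module R N] (f : M →ₗ[R] N) : Prop :=
  ∃ (P : Type u) (_ : AddCommGroup P) (_ : Module R P), Module.Projective R P ∧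
    ∃ (g : M →ₗ[R] P) (h : P →ₗ[R] N), h.comp g = f

/-- `Ext^i_R(X, Y) = 0`. -/
def extZero (R : Type u) [CommRing R] (i : ℕ) (X Y : ModuleCat.{u} R) : Prop :=
  Subsingleton (((Ext R (ModuleCat.{u} R) i).obj (Opposite.op X)).obj Y)

/-- `Y` is an `n`-th syzygy of `N` (via finitely generated projective modules). -/
def IsSyzygy (R : Type u) [CommRing R] : ℕ → ModuleCat.{u} R → ModuleCat.{u} R → Prop
  | 0, Y, N => Nonempty (Y ≅ N)
  | n+1, Y, N => ∃ (P K : ModuleCat.{u} R) (i : Y ⟶ P) (p : P ⟶ K),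
      Projective P ∧ Module.Finite R P ∧ Function.Injective i ∧ Function.Surjective p ∧
      Function.Exact i p ∧ IsSyzygy R n K N

/-- projective dimension at most `n` -/
def pdLE (A : Type u) [Ring A] : ℕ → ModuleCat.{u} A → Prop
  | 0, M => Projective M
  | n+1, M => Projective M ∨ ∃ (K P : ModuleCat.{u} A) (i : K ⟶ P) (p : P ⟶ M),
      Projective P ∧ Function.Injective i ∧ Function.Surjective p ∧
      Function.Exact i p ∧ pdLE A n K

/-- global dimension at most `n` -/
def gldimLE (A : Type u) [Ring A] (n : ℕ) : Prop := ∀ M : ModuleCat.{u} A, pdLE A n M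

/-- `M` is `d`-torsionfree: it is a `d`-th syzygy of a finitely generated module `N`
with `Ext^i(N,R) = 0` for `1 ≤ i ≤ d`. -/
def IsTorsionFree (R : Type u) [CommRing R] (d : ℕ) (M : ModuleCat.{u} R) : Prop :=
  ∃ N : ModuleCat.{u} R, Module.Finite R N ∧
    (∀ i, 1 ≤ i → i ≤ d → extZero R i N (ModuleCat.of R R)) ∧ IsSyzygy R d M N

/-- `N` lies in `add M`: it is a direct summand of a finite direct sum of copies of `M`. -/
def MemAdd (R : Type u) [CommRing R] (M N : ModuleCat.{u} R) : Prop :=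
  ∃ (k : ℕ) (i : N →ₗ[R] (Fin k → M)) (p : (Fin k → M) →ₗ[R] N), p.comp i = LinearMap.id

/-- The left `A`-module structure on the quotient of `A` by a two-sided ideal. -/
def quotSpanModule (A : Type u) [Ring A] (I : TwoSidedIdeal A) :
    Module A I.ringCon.Quotient :=
  Module.compHom _ I.ringCon.mk'

/-!
Put `A = End_R(M ⊕ W)` with `W = Ω^c X`, and let
`0 → W → P_{c-1} → ⋯ → P_0 → X → 0` be the resolution exhibiting the syzygy `W`. A `d`-torsionfree
module inherits `Ext^i_R(X, M) = 0` for `i ≤ c` from `R`, so the functors `Hom_R(-, M)` and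
`Hom_R(-, M ⊕ W)` are exact on this resolution up to the relevant degrees.

* Every map `W → M` extends to `P_{c-1} ∈ add M`, so `A/AeA` is the cokernel of
  `Hom_R(P_{c-1}, M ⊕ W) → Hom_R(W, M ⊕ W)`. The modules `Hom_R(P_i, M ⊕ W)` and
  `Hom_R(W, M ⊕ W)` form a projective resolution of `A/AeA`, which has length `c`.
* Cover `W` by a finitely generated projective `P_c` and let `C` be the cokernel of
  `Hom_R(P_{c-1}, M) → Hom_R(P_c, M)`. Then `0 → Hom_R(P_0, M) → ⋯ → Hom_R(P_c, M) → C → 0` is a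
  projective resolution over `End_R(M)`. If `C` had projective dimension below `c`, its first map
  would split; since `Hom_R(-, M)` is fully faithful on `add M`, the map `P_1 → P_0` would then be
  surjective and `X = 0`. Hence `c ≤ gldim End_R(M)` when `X ≠ 0`.
* If `X = 0`, then `W` is projective, so `W ∈ add M` and `A/AeA = 0`.
-/

section ProjectiveDimension

variable {A : Type u} [Ring A]

lemma pdLE_iff_hasProjectiveDimensionLE {n : ℕ} {M : ModuleCat.{u} A} :
    pdLE A n M ↔ HasProjectiveDimensionLE M n := by
  induction n generalizing M with
  | zero => exact projective_iff_hasProjectiveDimensionLE_zero M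
  | succ n ih =>
    constructor
    · rintro (hM | ⟨K, P, i, p, hP, hi, hp, hip, hK⟩)
      · exact hasProjectiveDimensionLT_of_ge M 1 _ (by lia)
      · have hS := ModuleCat.shortComplex_shortExact
          (ModuleCat.shortComplexOfCompEqZero i.hom p.hom hip.linearMap_comp_eq_zero) hip hi hp
        exact (hS.hasProjectiveDimensionLT_X₃_iff n hP).2 (ih.1 hK)
    · intro hM
      have hp : Function.Surjective (Projective.π M).hom :=
        (ModuleCat.epi_iff_surjective _).1 inferInstance
      have hS := LinearMap.shortExact_shortComplexKer hp
      refine .inr ⟨_, _, _, _, inferInstanceAs (Projective (Projective.over M)),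
        hS.moduleCat_injective_f, hp,
        (ShortComplex.ShortExact.moduleCat_exact_iff_function_exact _).1 hS.exact, ih.2 ?_⟩
      exact (hS.hasProjectiveDimensionLT_X₃_iff n
        (inferInstanceAs (Projective (Projective.over M)))).1 hM

variable {V₁ V₂ V₃ : Type u} [AddCommGroup V₁] [AddCommGroup V₂] [AddCommGroup V₃] [Module A V₁]
  [Module A V₂] [Module A V₃] [Module.Projective A V₂] {f : V₁ →ₗ[A] V₂} {g : V₂ →ₗ[A] V₃}

lemma hasProjectiveDimensionLT_succ_of_exact (hf : Function.Injective f)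
    (hg : Function.Surjective g) (hfg : Function.Exact f g) {n : ℕ}
    (h : HasProjectiveDimensionLT (ModuleCat.of A V₁) n) :
    HasProjectiveDimensionLT (ModuleCat.of A V₃) (n + 1) := by
  have hS := ModuleCat.shortComplex_shortExact
    (ModuleCat.shortComplexOfCompEqZero f g hfg.linearMap_comp_eq_zero) hfg hf hg
  exact hS.hasProjectiveDimensionLT_X₃ n h (hasProjectiveDimensionLT_of_ge _ 1 _ (by lia))

lemma hasProjectiveDimensionLT_of_exact (hf : Function.Injective f)
    (hg : Function.Surjective g) (hfg : Function.Exact f g) {n : ℕ}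
    (h : HasProjectiveDimensionLT (ModuleCat.of A V₃) (n + 2)) :
    HasProjectiveDimensionLT (ModuleCat.of A V₁) (n + 1) := by
  have hS := ModuleCat.shortComplex_shortExact
    (ModuleCat.shortComplexOfCompEqZero f g hfg.linearMap_comp_eq_zero) hfg hf hg
  exact (hS.hasProjectiveDimensionLT_X₃_iff n
    (inferInstanceAs (Projective (ModuleCat.of A V₂)))).1 h

lemma hasProjectiveDimensionLT_add_two_of_exact {V₄ : Type u} [AddCommGroup V₄] [Module A V₄]
    [Module.Projective A V₃] {h : V₃ →ₗ[A] V₄} (hf : Function.Injective f)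
    (hfg : Function.Exact f g) (hgh : Function.Exact g h) (hh : Function.Surjective h) {n : ℕ}
    (hn : HasProjectiveDimensionLT (ModuleCat.of A V₁) n) :
    HasProjectiveDimensionLT (ModuleCat.of A V₄) (n + 2) := by
  have hrange : HasProjectiveDimensionLT (ModuleCat.of A (LinearMap.range g)) (n + 1) :=
    hasProjectiveDimensionLT_succ_of_exact hf g.surjective_rangeRestrict
      (fun x => Subtype.ext_iff.trans (hfg x)) hn
  exact hasProjectiveDimensionLT_succ_of_exact (LinearMap.range g).injective_subtype hh
    (fun x => (hgh x).trans (by simp)) hrange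

end ProjectiveDimension

section Ext

variable {C : Type*} [Category* C] [Abelian C] [HasExt C] {S : ShortComplex C} {X Y Z : C}

lemma subsingleton_ext_of_iso {n : ℕ} (e : X ≅ Y) (h : Subsingleton (Abelian.Ext Y Z n)) :
    Subsingleton (Abelian.Ext X Z n) := by
  refine subsingleton_of_forall_eq 0 fun α => ?_
  calc α = (Abelian.Ext.mk₀ e.hom).comp ((Abelian.Ext.mk₀ e.inv).comp α (zero_add n))
          (zero_add n) := by
        rw [Abelian.Ext.mk₀_comp_mk₀_assoc, e.hom_inv_id, Abelian.Ext.mk₀_id_comp]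
    _ = 0 := by
        rw [Subsingleton.elim ((Abelian.Ext.mk₀ e.inv).comp α (zero_add n)) 0,
          Abelian.Ext.comp_zero]

lemma subsingleton_ext_X₁_of_X₃ (hS : S.ShortExact) [Projective S.X₂] {n : ℕ}
    (h : Subsingleton (Abelian.Ext S.X₃ Y (n + 2))) :
    Subsingleton (Abelian.Ext S.X₁ Y (n + 1)) := by
  refine subsingleton_of_forall_eq 0 fun α => ?_
  obtain ⟨β, rfl⟩ := Abelian.Ext.contravariant_sequence_exact₁ hS Y α (n₁ := n + 2) (by lia)
    (Subsingleton.elim _ _)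
  rw [Abelian.Ext.eq_zero_of_projective β, Abelian.Ext.comp_zero]

lemma subsingleton_ext_X₁ (hS : S.ShortExact) {m n : ℕ} (hmn : m + 1 = n)
    (h₃ : Subsingleton (Abelian.Ext X S.X₃ m)) (h₂ : Subsingleton (Abelian.Ext X S.X₂ n)) :
    Subsingleton (Abelian.Ext X S.X₁ n) := by
  refine subsingleton_of_forall_eq 0 fun α => ?_
  obtain ⟨β, rfl⟩ := Abelian.Ext.covariant_sequence_exact₁ X hS α (Subsingleton.elim _ _) hmn
  rw [Subsingleton.elim β 0, Abelian.Ext.zero_comp]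

lemma subsingleton_ext_X₂ (hS : S.ShortExact) {n : ℕ} (h₁ : Subsingleton (Abelian.Ext X S.X₁ n))
    (h₃ : Subsingleton (Abelian.Ext X S.X₃ n)) : Subsingleton (Abelian.Ext X S.X₂ n) := by
  refine subsingleton_of_forall_eq 0 fun α => ?_
  obtain ⟨β, rfl⟩ := Abelian.Ext.covariant_sequence_exact₂ X hS α (Subsingleton.elim _ _)
  rw [Subsingleton.elim β 0, Abelian.Ext.zero_comp]

lemma exists_comp_eq_of_shortExact (hS : S.ShortExact) (h : Subsingleton (Abelian.Ext S.X₃ Y 1))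
    (u : S.X₁ ⟶ Y) : ∃ v : S.X₂ ⟶ Y, S.f ≫ v = u := by
  obtain ⟨β, hβ⟩ := Abelian.Ext.contravariant_sequence_exact₁ hS Y (Abelian.Ext.mk₀ u)
    (n₁ := 1) (by lia) (Subsingleton.elim _ _)
  obtain ⟨v, rfl⟩ := (Abelian.Ext.mk₀_bijective _ _).2 β
  rw [Abelian.Ext.mk₀_comp_mk₀] at hβ
  exact ⟨v, (Abelian.Ext.mk₀_bijective _ _).1 hβ⟩

end Ext

section ExtModule

variable {R : Type u} [CommRing R]

lemma extZero.subsingleton_ext {i : ℕ} {X Y : ModuleCat.{u} R} (h : extZero R i X Y) :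
    Subsingleton (Abelian.Ext X Y i) := by
  obtain ⟨P⟩ := (inferInstance : HasProjectiveResolution X).out
  have hP : (P.complex.linearYonedaObj R Y).ExactAt i := by
    have : Subsingleton (((_root_.Ext R (ModuleCat.{u} R) i).obj (.op X)).obj Y) := h
    rw [HomologicalComplex.exactAt_iff_isZero_homology]
    exact (ModuleCat.isZero_of_subsingleton _).of_iso (P.isoExt (R := R) i Y).symm
  rw [HomologicalComplex.exactAt_iff' _ _ i (i + 1) rfl (by simp),
    ShortComplex.moduleCat_exact_iff] at hP
  refine subsingleton_of_forall_eq 0 fun α => ?_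
  obtain ⟨f, hf, rfl⟩ := P.extMk_surjective α (i + 1) rfl
  obtain ⟨g, hg⟩ := hP f hf
  cases i with
  | zero =>
    have hd : (P.complex.linearYonedaObj R Y).d ((ComplexShape.up ℕ).prev 0) 0 = 0 :=
      HomologicalComplex.shape _ _ _ (by simp)
    have hf0 : f = 0 := hg.symm.trans (congr($(hd) g))
    subst hf0
    exact P.extMk_zero _ _
  | succ i => exact (P.extMk_eq_zero_iff f _ rfl hf _ (by simp)).2 ⟨g, hg⟩

variable {X Y Z : ModuleCat.{u} R}

lemma subsingleton_ext_prod {n : ℕ} (hY : Subsingleton (Abelian.Ext X Y n))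
    (hZ : Subsingleton (Abelian.Ext X Z n)) :
    Subsingleton (Abelian.Ext X (ModuleCat.of R (Y × Z)) n) :=
  subsingleton_ext_X₂ (ModuleCat.shortComplex_shortExact
    (ModuleCat.shortComplexOfCompEqZero (LinearMap.inl R Y Z) (LinearMap.snd R Y Z)
      (LinearMap.snd_comp_inl ..)) Function.Exact.inl_snd LinearMap.inl_injective
      LinearMap.snd_surjective) hY hZ

end ExtModule

section MemAdd

variable {R : Type u} [CommRing R] {X Y Z : ModuleCat.{u} R}

lemma memAdd_iff_exists_sum_comp_eq_id : MemAdd R Z Y ↔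
    ∃ (k : ℕ) (a : Fin k → Y →ₗ[R] Z) (b : Fin k → Z →ₗ[R] Y),
      ∑ j, b j ∘ₗ a j = LinearMap.id := by
  constructor
  · rintro ⟨k, i, p, hpi⟩
    refine ⟨k, fun j => .proj j ∘ₗ i, fun j => p ∘ₗ .single R (fun _ => Z) j, ?_⟩
    rw [← hpi]
    ext y
    simp [← map_sum, Finset.univ_sum_single]
  · rintro ⟨k, a, b, hab⟩
    refine ⟨k, .pi a, .lsum R _ R b, ?_⟩
    rw [← hab]
    ext y
    simp

lemma memAdd_of_sum_comp_eq_id {ι : Type*} [Fintype ι] (a : ι → Y →ₗ[R] Z) (b : ι → Z →ₗ[R] Y)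
    (hab : ∑ j, b j ∘ₗ a j = LinearMap.id) : MemAdd R Z Y := by
  let e := Fintype.equivFin ι
  refine memAdd_iff_exists_sum_comp_eq_id.2 ⟨_, a ∘ e.symm, b ∘ e.symm, ?_⟩
  rw [← hab]
  exact e.symm.sum_comp fun j => b j ∘ₗ a j

lemma memAdd_of_comp_eq_id (i : Y →ₗ[R] Z) (p : Z →ₗ[R] Y) (hpi : p ∘ₗ i = LinearMap.id) :
    MemAdd R Z Y :=
  memAdd_of_sum_comp_eq_id (ι := Unit) (fun _ => i) (fun _ => p) (by simpa using hpi)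

lemma MemAdd.trans (hYZ : MemAdd R Z Y) (hXY : MemAdd R Y X) : MemAdd R Z X := by
  obtain ⟨k, a, b, hab⟩ := memAdd_iff_exists_sum_comp_eq_id.1 hYZ
  obtain ⟨l, a', b', hab'⟩ := memAdd_iff_exists_sum_comp_eq_id.1 hXY
  refine memAdd_of_sum_comp_eq_id (ι := Fin l × Fin k) (fun j => a j.2 ∘ₗ a' j.1)
    (fun j => b' j.1 ∘ₗ b j.2) ?_
  calc ∑ j : Fin l × Fin k, (b' j.1 ∘ₗ b j.2) ∘ₗ (a j.2 ∘ₗ a' j.1)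
      = ∑ j, b' j ∘ₗ (∑ j, b j ∘ₗ a j) ∘ₗ a' j := by
        ext x
        simp [Fintype.sum_prod_type]
    _ = LinearMap.id := by simp [hab, hab']

lemma memAdd_ring_of_projective (P : ModuleCat.{u} R) [Module.Finite R P] [Module.Projective R P] :
    MemAdd R (ModuleCat.of R R) P := by
  obtain ⟨k, p, hp⟩ := Module.Finite.exists_fin' R P
  obtain ⟨i, hpi⟩ := Module.projective_lifting_property p LinearMap.id hp
  exact ⟨k, i, p, hpi⟩

lemma memAdd_prod_left : MemAdd R (ModuleCat.of R (Y × Z)) Y :=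
  memAdd_of_comp_eq_id (LinearMap.inl R Y Z) (LinearMap.fst R Y Z) (LinearMap.fst_comp_inl ..)

lemma memAdd_prod_right : MemAdd R (ModuleCat.of R (Y × Z)) Z :=
  memAdd_of_comp_eq_id (LinearMap.inr R Y Z) (LinearMap.snd R Y Z) (LinearMap.snd_comp_inr ..)

lemma MemAdd.subsingleton_ext (hYZ : MemAdd R Z Y) {n : ℕ}
    (h : Subsingleton (Abelian.Ext X Z n)) : Subsingleton (Abelian.Ext X Y n) := by
  obtain ⟨k, a, b, hab⟩ := memAdd_iff_exists_sum_comp_eq_id.1 hYZ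
  have hid : 𝟙 Y = ∑ j, ModuleCat.ofHom (a j) ≫ ModuleCat.ofHom (b j) := by
    ext y
    simpa [ModuleCat.hom_sum] using (LinearMap.congr_fun hab y).symm
  refine subsingleton_of_forall_eq 0 fun α => ?_
  calc α = α.comp (.mk₀ (𝟙 Y)) (add_zero n) := (α.comp_mk₀_id).symm
    _ = ∑ j, (α.comp (.mk₀ (ModuleCat.ofHom (a j))) (add_zero n)).comp
          (.mk₀ (ModuleCat.ofHom (b j))) (add_zero n) := by
        rw [hid, Abelian.Ext.mk₀_sum, Abelian.Ext.comp_sum]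
        refine Finset.sum_congr rfl fun j _ => ?_
        rw [Abelian.Ext.comp_assoc_of_second_deg_zero, Abelian.Ext.mk₀_comp_mk₀]
    _ = 0 := Finset.sum_eq_zero fun j _ => by
        rw [Subsingleton.elim (α.comp _ _) 0, Abelian.Ext.zero_comp]

end MemAdd

namespace IsSyzygy

variable {R : Type u} [CommRing R] {n : ℕ} {X Y N : ModuleCat.{u} R}

lemma exists_shortExact (h : IsSyzygy R (n + 1) Y N) :
    ∃ (P K : ModuleCat.{u} R) (i : Y ⟶ P) (p : P ⟶ K) (w : i ≫ p = 0),
      (ShortComplex.mk i p w).ShortExact ∧ Module.Projective R P ∧ Module.Finite R P ∧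
        IsSyzygy R n K N := by
  obtain ⟨P, K, i, p, hP, hfin, hi, hp, hip, hK⟩ := h
  have w : i ≫ p = 0 := by
    ext y
    exact hip.apply_apply_eq_zero y
  exact ⟨P, K, i, p, w, ModuleCat.shortComplex_shortExact (.mk i p w) hip hi hp,
    (IsProjective.iff_projective P).2 hP, hfin, hK⟩

lemma subsingleton_ext_left (h : IsSyzygy R n Y X) {i : ℕ}
    (hX : Subsingleton (Abelian.Ext X N (n + i + 1))) : Subsingleton (Abelian.Ext Y N (i + 1)) := by
  induction n generalizing Y i with
  | zero =>
    obtain ⟨e⟩ := h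
    exact subsingleton_ext_of_iso e (by simpa using hX)
  | succ n ih =>
    obtain ⟨P, K, f, g, w, hS, hP, -, hK⟩ := h.exists_shortExact
    have : Projective (ShortComplex.mk f g w).X₂ := inferInstanceAs (Projective P)
    exact subsingleton_ext_X₁_of_X₃ hS (ih hK (by convert hX using 2; lia))

lemma subsingleton_ext_right (h : IsSyzygy R n Y N) {i : ℕ} (hi : i < n)
    (hX : ∀ j ≤ i, Subsingleton (Abelian.Ext X (ModuleCat.of R R) j)) :
    Subsingleton (Abelian.Ext X Y i) := by
  induction i generalizing n Y with
  | zero =>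
    obtain ⟨m, rfl⟩ := Nat.exists_eq_add_of_lt hi
    obtain ⟨P, K, f, g, w, hS, hP, hfin, -⟩ := h.exists_shortExact
    have hXP : Subsingleton (Abelian.Ext X P 0) :=
      (memAdd_ring_of_projective P).subsingleton_ext (hX 0 le_rfl)
    have := hS.mono_f
    exact (Abelian.Ext.postcomp_mk₀_injective_of_mono X f).subsingleton
  | succ i ih =>
    obtain ⟨m, rfl⟩ := Nat.exists_eq_add_of_lt hi
    obtain ⟨P, K, f, g, w, hS, hP, hfin, hK⟩ := h.exists_shortExact
    have hXP : Subsingleton (Abelian.Ext X P (i + 1)) :=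
      (memAdd_ring_of_projective P).subsingleton_ext (hX _ le_rfl)
    have hXK : Subsingleton (Abelian.Ext X K i) := ih hK (by lia) fun j hj => hX j (by lia)
    exact subsingleton_ext_X₁ hS rfl hXK hXP

protected lemma finite [IsNoetherianRing R] [Module.Finite R N] (h : IsSyzygy R n Y N) :
    Module.Finite R Y := by
  cases n with
  | zero =>
    obtain ⟨e⟩ := h
    exact Module.Finite.equiv e.toLinearEquiv.symm
  | succ n =>
    obtain ⟨P, -, f, -, -, hfin, hf, -⟩ := h
    exact Module.Finite.of_injective f.hom hf

protected lemma projective [Module.Projective R N] (h : IsSyzygy R n Y N) :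
    Module.Projective R Y := by
  rw [IsProjective.iff_projective, projective_iff_subsingleton_ext_one]
  have : Projective N := (IsProjective.iff_projective N).1 inferInstance
  exact fun Z => h.subsingleton_ext_left
    (subsingleton_of_forall_eq 0 Abelian.Ext.eq_zero_of_projective)

end IsSyzygy

lemma IsTorsionFree.subsingleton_ext {R : Type u} [CommRing R] {d : ℕ} {X Y : ModuleCat.{u} R}
    (hY : IsTorsionFree R d Y) {i : ℕ} (hi : i < d)
    (hX : ∀ j ≤ i, Subsingleton (Abelian.Ext X (ModuleCat.of R R) j)) :
    Subsingleton (Abelian.Ext X Y i) := by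
  obtain ⟨N, -, -, hN⟩ := hY
  exact hN.subsingleton_ext_right hi hX

section EndHom

open LinearMap

variable {R : Type u} [CommRing R] {Z P Q : ModuleCat.{u} R}

lemma MemAdd.eq_of_forall_hom_apply_eq (hP : MemAdd R Z P) {x y : P}
    (h : ∀ u : P →ₗ[R] Z, u x = u y) : x = y := by
  obtain ⟨k, i, p, hpi⟩ := hP
  have hi : i x = i y := funext fun j => h (.proj j ∘ₗ i)
  exact (injective_of_comp_eq_id i p hpi) hi

lemma MemAdd.exists_forall_sum_smul_eq (hP : MemAdd R Z P) :
    ∃ (k : ℕ) (a : Fin k → P →ₗ[R] Z) (b : Fin k → Z →ₗ[R] P),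
      ∀ u : P →ₗ[R] Z, ∑ j, lcomp (Module.End R Z) Z (b j) u • a j = u := by
  obtain ⟨k, a, b, hab⟩ := memAdd_iff_exists_sum_comp_eq_id.1 hP
  refine ⟨k, a, b, fun u => ?_⟩
  ext x
  simpa using congr(u ($hab x))

lemma MemAdd.projective_hom (hP : MemAdd R Z P) :
    Module.Projective (Module.End R Z) (P →ₗ[R] Z) := by
  obtain ⟨k, a, b, hab⟩ := hP.exists_forall_sum_smul_eq
  let i : (P →ₗ[R] Z) →ₗ[Module.End R Z] Fin k → Module.End R Z := .pi fun j => lcomp _ _ (b j)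
  exact .of_split i (.lsum _ _ ℕ fun j => toSpanSingleton _ _ (a j)) (LinearMap.ext fun u => by
    simpa [i] using hab u)

lemma MemAdd.exists_eq_lcomp (hP : MemAdd R Z P)
    (r : (P →ₗ[R] Z) →ₗ[Module.End R Z] (Q →ₗ[R] Z)) : ∃ s : Q →ₗ[R] P, r = lcomp _ _ s := by
  obtain ⟨k, a, b, hab⟩ := hP.exists_forall_sum_smul_eq
  refine ⟨∑ j, b j ∘ₗ r (a j), LinearMap.ext fun u => ?_⟩
  calc r u = r (∑ j, lcomp (Module.End R Z) Z (b j) u • a j) := by rw [hab]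
    _ = ∑ j, (u ∘ₗ b j) ∘ₗ r (a j) := by
      rw [map_sum]
      exact Finset.sum_congr rfl fun j _ => map_smul r _ _
    _ = u ∘ₗ ∑ j, b j ∘ₗ r (a j) := LinearMap.ext fun x => by simp

/- The sequence `Hom(Q, Z) → Hom(P, Z) → C` splits, and by `MemAdd.exists_eq_lcomp` the splitting
comes from a section of `p`. -/
lemma MemAdd.surjective_of_exact_lcomp (hP : MemAdd R Z P) (hQ : MemAdd R Z Q) {p : P →ₗ[R] Q}
    (hp : Function.Injective (lcomp (Module.End R Z) Z p)) {C : Type*} [AddCommGroup C]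
    [Module (Module.End R Z) C] [Module.Projective (Module.End R Z) C]
    {q : (P →ₗ[R] Z) →ₗ[Module.End R Z] C} (hpq : Function.Exact (lcomp (Module.End R Z) Z p) q)
    (hq : Function.Surjective q) : Function.Surjective p := by
  obtain ⟨-, r, hr⟩ := (hpq.split_tfae'.out 0 1 rfl rfl).1
    ⟨hp, Module.projective_lifting_property q LinearMap.id hq⟩
  obtain ⟨s, rfl⟩ := hP.exists_eq_lcomp r
  exact fun x => ⟨s x, hQ.eq_of_forall_hom_apply_eq fun u => congr($hr u x)⟩

end EndHom

section HomSyzygy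

open LinearMap

variable {R : Type u} [CommRing R] {n : ℕ} {K P X Z : ModuleCat.{u} R}

lemma subsingleton_linearMap_of_ext_zero (h : Subsingleton (Abelian.Ext X Z 0)) :
    Subsingleton (X →ₗ[R] Z) :=
  ⟨fun u v => ModuleCat.hom_ext_iff.1 <| (Abelian.Ext.mk₀_bijective X Z).1 <|
    h.elim (.mk₀ (ModuleCat.ofHom u)) (.mk₀ (ModuleCat.ofHom v))⟩

lemma surjective_lcomp_of_shortExact {S : ShortComplex (ModuleCat.{u} R)} (hS : S.ShortExact)
    (h : Subsingleton (Abelian.Ext S.X₃ Z 1)) :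
    Function.Surjective (lcomp (Module.End R Z) Z S.f.hom) := by
  intro u
  obtain ⟨v, hv⟩ := exists_comp_eq_of_shortExact hS h (ModuleCat.ofHom u)
  exact ⟨v.hom, congr(ModuleCat.Hom.hom $hv)⟩

lemma exact_lcomp_of_shortExact {S : ShortComplex (ModuleCat.{u} R)} (hS : S.ShortExact) :
    Function.Exact (lcomp (Module.End R Z) Z S.g.hom) (lcomp (Module.End R Z) Z S.f.hom) :=
  exact_lcomp_of_exact_of_surjective Z
    ((ShortComplex.ShortExact.moduleCat_exact_iff_function_exact _).1 hS.exact)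
    hS.moduleCat_surjective_g

lemma injective_lcomp_of_shortExact {S : ShortComplex (ModuleCat.{u} R)} (hS : S.ShortExact) :
    Function.Injective (lcomp (Module.End R Z) Z S.g.hom) :=
  lcomp_injective_of_surjective _ hS.moduleCat_surjective_g

theorem IsSyzygy.hasProjectiveDimensionLT_hom (hK : IsSyzygy R n K X)
    (hZ : MemAdd R Z (ModuleCat.of R R)) (hX : ∀ i ≤ n, Subsingleton (Abelian.Ext X Z i)) :
    HasProjectiveDimensionLT (ModuleCat.of (Module.End R Z) (K →ₗ[R] Z)) n := by
  induction n generalizing K with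
  | zero =>
    obtain ⟨e⟩ := hK
    have := subsingleton_linearMap_of_ext_zero (subsingleton_ext_of_iso e (hX 0 le_rfl))
    exact (ModuleCat.isZero_of_subsingleton _).hasProjectiveDimensionLT_zero
  | succ n ih =>
    obtain ⟨P, L, f, g, w, hS, hP, hfin, hL⟩ := hK.exists_shortExact
    have : Module.Projective (Module.End R Z) (P →ₗ[R] Z) :=
      (hZ.trans (memAdd_ring_of_projective P)).projective_hom
    exact hasProjectiveDimensionLT_succ_of_exact (injective_lcomp_of_shortExact hS)
      (surjective_lcomp_of_shortExact hS (hL.subsingleton_ext_left (hX (n + 1) le_rfl)))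
      (exact_lcomp_of_shortExact hS) (ih hL fun i hi => hX i (by lia))

variable {C : Type u} [AddCommGroup C] [Module (Module.End R Z) C]
  {q : (P →ₗ[R] Z) →ₗ[Module.End R Z] C}

lemma IsSyzygy.subsingleton_of_projective (hK : IsSyzygy R 1 K X)
    (hZ : MemAdd R Z (ModuleCat.of R R)) (hX : ∀ i ≤ 1, Subsingleton (Abelian.Ext X Z i))
    (hP : MemAdd R Z P) {p : P →ₗ[R] K} (hp : Function.Surjective p) (hq : Function.Surjective q)
    (hpq : Function.Exact (lcomp (Module.End R Z) Z p) q) [Module.Projective (Module.End R Z) C] :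
    Subsingleton X := by
  obtain ⟨Q, L, f, g, w, hS, hQ, hfin, ⟨e⟩⟩ := hK.exists_shortExact
  have hL : Subsingleton (L →ₗ[R] Z) :=
    subsingleton_linearMap_of_ext_zero (subsingleton_ext_of_iso e (hX 0 zero_le_one))
  have hf_inj : Function.Injective (lcomp (Module.End R Z) Z f.hom) :=
    (injective_iff_map_eq_zero _).2 fun u hu => by
      obtain ⟨v, rfl⟩ := (exact_lcomp_of_shortExact (Z := Z) hS u).1 hu
      rw [Subsingleton.elim v 0, map_zero]
  have hf_surj : Function.Surjective (lcomp (Module.End R Z) Z f.hom) :=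
    surjective_lcomp_of_shortExact hS (subsingleton_ext_of_iso e (hX 1 le_rfl))
  have hexact : Function.Exact (lcomp (Module.End R Z) Z (f.hom ∘ₗ p)) q :=
    hf_surj.comp_exact_iff_exact.2 hpq
  have hinj : Function.Injective (lcomp (Module.End R Z) Z (f.hom ∘ₗ p)) :=
    Function.Injective.comp (g := lcomp (Module.End R Z) Z p)
      (lcomp_injective_of_surjective p hp) hf_inj
  have hfp : Function.Surjective (f.hom ∘ₗ p) :=
    hP.surjective_of_exact_lcomp (hZ.trans (memAdd_ring_of_projective Q)) hinj hexact hq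
  have hg : ∀ y, g.hom y = 0 := fun y => by
    obtain ⟨x, rfl⟩ := hfp y
    exact congr(ModuleCat.Hom.hom $w (p x))
  refine subsingleton_of_forall_eq 0 fun x => ?_
  obtain ⟨y, hy⟩ := hS.moduleCat_surjective_g (e.inv x)
  rw [← e.toLinearEquiv.symm.map_eq_zero_iff]
  exact hy.symm.trans (hg y)

theorem IsSyzygy.subsingleton_of_hasProjectiveDimensionLE (hK : IsSyzygy R (n + 1) K X)
    (hZ : MemAdd R Z (ModuleCat.of R R)) (hX : ∀ i ≤ n + 1, Subsingleton (Abelian.Ext X Z i))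
    (hP : MemAdd R Z P) {p : P →ₗ[R] K} (hp : Function.Surjective p) (hq : Function.Surjective q)
    (hpq : Function.Exact (lcomp (Module.End R Z) Z p) q)
    (hC : HasProjectiveDimensionLE (ModuleCat.of (Module.End R Z) C) n) : Subsingleton X := by
  induction n generalizing K P C with
  | zero =>
    have : Module.Projective (Module.End R Z) C :=
      (IsProjective.iff_projective C).2 ((projective_iff_hasProjectiveDimensionLE_zero _).2 hC)
    exact hK.subsingleton_of_projective hZ hX hP hp hq hpq
  | succ n ih =>
    obtain ⟨Q, L, f, g, w, hS, hQ, hfin, hL⟩ := hK.exists_shortExact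
    have : Module.Projective (Module.End R Z) (P →ₗ[R] Z) := hP.projective_hom
    exact ih hL (fun i hi => hX i (by lia)) (hZ.trans (memAdd_ring_of_projective Q))
      hS.moduleCat_surjective_g
      (surjective_lcomp_of_shortExact hS (hL.subsingleton_ext_left (hX (n + 2) le_rfl)))
      (exact_lcomp_of_shortExact hS)
      (hasProjectiveDimensionLT_of_exact (lcomp_injective_of_surjective p hp) hq hpq hC)

theorem IsSyzygy.le_of_gldimLE [Nontrivial X] [Module.Finite R K] (hK : IsSyzygy R n K X)
    (hZ : MemAdd R Z (ModuleCat.of R R)) (hX : ∀ i ≤ n, Subsingleton (Abelian.Ext X Z i))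
    {a : ℕ} (ha : gldimLE (Module.End R Z) a) : n ≤ a := by
  by_contra! han
  obtain ⟨m, rfl⟩ := Nat.exists_eq_succ_of_ne_zero han.ne_bot
  obtain ⟨k, p, hp⟩ := Module.Finite.exists_fin' R K
  have hP : MemAdd R Z (ModuleCat.of R (Fin k → R)) := hZ.trans (memAdd_ring_of_projective _)
  have hC := pdLE_iff_hasProjectiveDimensionLE.1 (ha (ModuleCat.of (Module.End R Z)
    (((Fin k → R) →ₗ[R] Z) ⧸ range (lcomp (Module.End R Z) Z p))))
  refine not_subsingleton X (hK.subsingleton_of_hasProjectiveDimensionLE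
    hZ hX hP hp (Submodule.mkQ_surjective _)
    (exact_map_mkQ_range _) (hasProjectiveDimensionLT_of_ge _ (a + 1) _ (by lia)))

end HomSyzygy

section FstQuotient

open LinearMap

variable {R : Type u} [CommRing R] {M W P X : ModuleCat.{u} R}

variable (M W) in
/-- The ideal `AeA` of `A = End_R(M ⊕ W)`, where `e` is the projection onto `M`. -/
def fstIdeal : TwoSidedIdeal (Module.End R (M × W)) :=
  .span {inl R M W ∘ₗ fst R M W}

variable (M W) in
/-- The left `A`-module `A/AeA` for `A = End_R(M ⊕ W)` and `e` the projection onto `M`. -/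
def fstQuotient : ModuleCat (Module.End R (M × W)) :=
  @ModuleCat.of _ _ (fstIdeal M W).ringCon.Quotient _ (quotSpanModule _ _)

lemma comp_mem_fstIdeal (t : M →ₗ[R] M × W) (s : M × W →ₗ[R] M) : t ∘ₗ s ∈ fstIdeal M W := by
  have he : inl R M W ∘ₗ fst R M W ∈ fstIdeal M W := TwoSidedIdeal.subset_span rfl
  exact (fstIdeal M W).mul_mem_right _ (inl R M W ∘ₗ s)
    ((fstIdeal M W).mul_mem_left (t ∘ₗ fst R M W) _ he)

lemma MemAdd.comp_mem_fstIdeal (hP : MemAdd R M P) (t : P →ₗ[R] M × W) (s : M × W →ₗ[R] P) :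
    t ∘ₗ s ∈ fstIdeal M W := by
  obtain ⟨k, a, b, hab⟩ := memAdd_iff_exists_sum_comp_eq_id.1 hP
  have hts : t ∘ₗ s = ∑ j, (t ∘ₗ b j) ∘ₗ (a j ∘ₗ s) := by
    refine LinearMap.ext fun x => ?_
    simpa using congr(t ($hab.symm (s x)))
  rw [hts]
  exact sum_mem fun j _ => _root_.comp_mem_fstIdeal _ _

open scoped Pointwise in
lemma comp_inr_mem_of_mem_fstIdeal {x : Module.End R (M × W)} (hx : x ∈ fstIdeal M W)
    {S : AddSubgroup (W →ₗ[R] M × W)} (hS : ∀ (t : M →ₗ[R] M × W) (s : W →ₗ[R] M), t ∘ₗ s ∈ S) :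
    x ∘ₗ inr R M W ∈ S := by
  rw [fstIdeal, TwoSidedIdeal.mem_span_iff_mem_addSubgroup_closure] at hx
  induction hx using AddSubgroup.closure_induction with
  | mem x hx =>
    obtain ⟨_, ⟨t, -, _, rfl, rfl⟩, s, -, rfl⟩ := hx
    exact hS (t ∘ₗ inl R M W) (fst R M W ∘ₗ s ∘ₗ inr R M W)
  | zero => exact S.zero_mem
  | add x y _ _ hx hy => exact S.add_mem hx hy
  | neg x _ hx => exact S.neg_mem hx

variable (M W) in
/-- The map `Hom_R(W, M ⊕ W) → A/AeA` of left modules over `A = End_R(M ⊕ W)` that extends a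
homomorphism by zero on `M`. -/
def homToFstQuotient : (W →ₗ[R] M × W) →ₗ[Module.End R (M × W)] fstQuotient M W where
  toFun h := (fstIdeal M W).ringCon.mk' (h ∘ₗ snd R M W)
  map_add' h h' := map_add (fstIdeal M W).ringCon.mk' (h ∘ₗ snd R M W) (h' ∘ₗ snd R M W)
  map_smul' r h := map_mul (fstIdeal M W).ringCon.mk' r (h ∘ₗ snd R M W)

lemma homToFstQuotient_eq_zero_iff {h : W →ₗ[R] M × W} :
    homToFstQuotient M W h = 0 ↔ h ∘ₗ snd R M W ∈ fstIdeal M W :=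
  (RingCon.eq _).trans (TwoSidedIdeal.mem_iff _ _).symm

lemma homToFstQuotient_surjective : Function.Surjective (homToFstQuotient M W) := by
  intro x
  obtain ⟨y, rfl⟩ := (fstIdeal M W).ringCon.mk'_surjective x
  refine ⟨y ∘ₗ inr R M W, (RingCon.eq _).2 ((TwoSidedIdeal.rel_iff _ _ _).2 ?_)⟩
  have hy : (y ∘ₗ inr R M W) ∘ₗ snd R M W - y = (-y ∘ₗ inl R M W) ∘ₗ fst R M W := by
    ext x : 2 <;> simp [Prod.mk_zero_zero]
  rw [hy]
  exact comp_mem_fstIdeal _ _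

lemma mem_of_homToFstQuotient_eq_zero {h : W →ₗ[R] M × W} (hh : homToFstQuotient M W h = 0)
    {S : AddSubgroup (W →ₗ[R] M × W)} (hS : ∀ (t : M →ₗ[R] M × W) (s : W →ₗ[R] M), t ∘ₗ s ∈ S) :
    h ∈ S := by
  simpa only [comp_assoc, snd_comp_inr, comp_id] using
    comp_inr_mem_of_mem_fstIdeal (homToFstQuotient_eq_zero_iff.1 hh) hS

lemma homToFstQuotient_injective [Subsingleton (W →ₗ[R] M)] :
    Function.Injective (homToFstQuotient M W) :=
  (injective_iff_map_eq_zero _).2 fun h hh => by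
    refine mem_of_homToFstQuotient_eq_zero hh (S := ⊥) fun t s => ?_
    rw [Subsingleton.elim s 0, comp_zero]
    exact AddSubgroup.zero_mem _

lemma MemAdd.exact_homToFstQuotient (hP : MemAdd R M P) {f : W →ₗ[R] P}
    (hf : Function.Surjective (lcomp (Module.End R M) M f)) :
    Function.Exact (lcomp (Module.End R (M × W)) (M × W) f) (homToFstQuotient M W) := by
  refine fun h => ⟨fun hh => ?_, ?_⟩
  · refine mem_of_homToFstQuotient_eq_zero hh
      (S := (range (lcomp (Module.End R (M × W)) (M × W) f)).toAddSubgroup) fun t s => ?_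
    obtain ⟨v, rfl⟩ := hf s
    exact ⟨t ∘ₗ v, rfl⟩
  · rintro ⟨v, rfl⟩
    exact homToFstQuotient_eq_zero_iff.2 (hP.comp_mem_fstIdeal v (f ∘ₗ snd R M W))

lemma MemAdd.subsingleton_fstQuotient (hW : MemAdd R M W) : Subsingleton (fstQuotient M W) := by
  refine subsingleton_of_forall_eq 0 fun x => ?_
  obtain ⟨h, rfl⟩ := homToFstQuotient_surjective x
  exact homToFstQuotient_eq_zero_iff.2 (hW.comp_mem_fstIdeal h (snd R M W))

theorem IsSyzygy.hasProjectiveDimensionLE_fstQuotient {c : ℕ} (hW : IsSyzygy R c W X)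
    (hM : MemAdd R M (ModuleCat.of R R)) (hX : ∀ i ≤ c, Subsingleton (Abelian.Ext X M i)) :
    HasProjectiveDimensionLE (fstQuotient M W) c := by
  have : Module.Projective (Module.End R (M × W)) (W →ₗ[R] M × W) :=
    (memAdd_prod_right (Y := M) (Z := W)).projective_hom
  cases c with
  | zero =>
    obtain ⟨e⟩ := hW
    have := subsingleton_linearMap_of_ext_zero (subsingleton_ext_of_iso e (hX 0 le_rfl))
    have hproj : Module.Projective (Module.End R (M × W)) (fstQuotient M W) :=
      .of_equiv (.ofBijective _ ⟨homToFstQuotient_injective, homToFstQuotient_surjective⟩)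
    exact (projective_iff_hasProjectiveDimensionLE_zero _).1
      ((IsProjective.iff_projective (fstQuotient M W)).1 hproj)
  | succ n =>
    have hXZ : ∀ i ≤ n, Subsingleton (Abelian.Ext X (ModuleCat.of R (M × W)) i) := fun i hi =>
      subsingleton_ext_prod (hX i (by lia)) (hW.subsingleton_ext_right (by lia) fun j hj =>
        hM.subsingleton_ext (hX j (by lia)))
    obtain ⟨P, L, f, g, w, hS, hP, hfin, hL⟩ := hW.exists_shortExact
    have hMP : MemAdd R M P := hM.trans (memAdd_ring_of_projective P)
    have hZ : MemAdd R (ModuleCat.of R (M × W)) (ModuleCat.of R R) := memAdd_prod_left.trans hM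
    have : Module.Projective (Module.End R (M × W)) (P →ₗ[R] M × W) :=
      (hZ.trans (memAdd_ring_of_projective P)).projective_hom
    have hexact : Function.Exact (lcomp (Module.End R (M × W)) (M × W) f.hom)
        (homToFstQuotient M W) :=
      hMP.exact_homToFstQuotient
        (surjective_lcomp_of_shortExact hS (hL.subsingleton_ext_left (hX (n + 1) le_rfl)))
    exact hasProjectiveDimensionLT_add_two_of_exact (A := Module.End R (M × W))
      (V₄ := fstQuotient M W) (injective_lcomp_of_shortExact hS)
      (exact_lcomp_of_shortExact hS) hexact homToFstQuotient_surjective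
      (hL.hasProjectiveDimensionLT_hom hZ hXZ)

end FstQuotient

theorem stmt10_general (R : Type u) [CommRing R] (c : ℕ) (M X : ModuleCat.{u} R)
    (hgen : MemAdd R M (ModuleCat.of R R))
    (hext : ∀ i ≤ c, Subsingleton (Abelian.Ext X M i))
    (W : ModuleCat.{u} R) [Module.Finite R W] (hW : IsSyzygy R c W X)
    (a : ℕ) (ha : gldimLE (Module.End R M) a) :
    pdLE (Module.End R (M × W)) a
      (@ModuleCat.of (Module.End R (M × W)) _
        (TwoSidedIdeal.span
          ({(LinearMap.inl R M W).comp (LinearMap.fst R M W)} :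
            Set (Module.End R (M × W)))).ringCon.Quotient _
        (quotSpanModule _ _)) := by
  change pdLE _ a (fstQuotient M W)
  rw [pdLE_iff_hasProjectiveDimensionLE]
  cases subsingleton_or_nontrivial X
  · have := hW.projective
    have := (hgen.trans (memAdd_ring_of_projective W)).subsingleton_fstQuotient
    have := (ModuleCat.isZero_of_subsingleton (fstQuotient M W)).hasProjectiveDimensionLT_zero
    exact hasProjectiveDimensionLT_of_ge _ 0 _ (by lia)
  · have hca : c ≤ a := hW.le_of_gldimLE hgen hext ha
    have := hW.hasProjectiveDimensionLE_fstQuotient hgen hext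
    exact hasProjectiveDimensionLT_of_ge _ (c + 1) _ (by lia)

/-- With `A = End_R(M ⊕ Ω^c X)` and `e` the idempotent projecting onto `M`,
the projective dimension of the left `A`-module `A/AeA` is at most `gldim End_R(M)`. -/
theorem stmt10 (R : Type u) [CommRing R] [IsNoetherianRing R] (d c : ℕ) (hcd : c < d)
    (M X : ModuleCat.{u} R) [Module.Finite R M] [Module.Finite R X]
    (hM : IsTorsionFree R d M)
    (hgen : MemAdd R M (ModuleCat.of R R))
    (hgrade : ∀ i ≤ c, extZero R i X (ModuleCat.of R R))
    (W : ModuleCat.{u} R) (hW : IsSyzygy R c W X)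
    (a : ℕ) (ha : gldimLE (Module.End R M) a) :
    pdLE (Module.End R (M × W)) a
      (@ModuleCat.of (Module.End R (M × W)) _
        (TwoSidedIdeal.span
          ({(LinearMap.inl R M W).comp (LinearMap.fst R M W)} :
            Set (Module.End R (M × W)))).ringCon.Quotient _
        (quotSpanModule _ _)) := by
  have := hW.finite
  exact stmt10_general R c M X hgen (fun i hi => hM.subsingleton_ext (by lia) fun j hj =>
    (hgrade j (by lia)).subsingleton_ext) W hW a ha
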